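/- arXiv:1806.05206 — 2 statements merged into one kernel-verified Lean document; each statement's English description precedes it below -/
import Mathlib

section
/- Under the stated gap assumptions, the symmetric operator A satisfies Krein's gap condition: for every x ∈ D(A), ‖Ax − ((λ₀+λ₁)/2)·x‖ ≥ ((λ₁−λ₀)/2)·‖x‖. -/
local notation "⟪" x ", " y "⟫" => @inner ℂ _ _ x y

/-!
For `A` symmetric and `q(z) = re ⟨z, A z⟩ - m ‖z‖²`, one has
`re ⟨(A - m) (w - v), w + v⟩ = q(w) - q(v)`. If `c ≥ 0`, `q(w) ≥ c ‖w‖²` and `q(v) ≤ -c ‖v‖²`, then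
the parallelogram law bounds the right-hand side from below by
`c (‖w‖² + ‖v‖²) ≥ c ‖w - v‖ ‖w + v‖`, so Cauchy–Schwarz on the left-hand side gives
`c ‖w - v‖ ≤ ‖(A - m) (w - v)‖`. For `m = (λ₀ + λ₁) / 2` and each `c < (λ₁ - λ₀) / 2`, the gap
assumptions let one write every `x` in the domain as such a difference `w - v` with `v ∈ F₋`.
-/

theorem codisjoint_submoduleOf_range_ker {R M : Type*} [Ring R] [AddCommGroup M] [Module R M]
    {P : Module.End R M} (hP : IsIdempotentElem P) {D : Submodule R M}
    (hD : D ∈ P.invtSubmodule) :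
    Codisjoint (P.range.submoduleOf D) (P.ker.submoduleOf D) := by
  refine Submodule.codisjoint_iff_exists_add_eq.2 fun x ↦ ?_
  refine ⟨⟨P x, hD x.2⟩, x - ⟨P x, hD x.2⟩, LinearMap.mem_range_self P x, ?_, by abel⟩
  have hPP : P (P x) = P x := LinearMap.congr_fun hP x
  simp [Submodule.submoduleOf, hPP]

section GapEstimate

variable {𝕜 E : Type*} [RCLike 𝕜]

theorem norm_sub_mul_norm_add_le [SeminormedAddCommGroup E] [InnerProductSpace 𝕜 E] (x y : E) :
    ‖x - y‖ * ‖x + y‖ ≤ ‖x‖ ^ 2 + ‖y‖ ^ 2 := by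
  have hpar := parallelogram_law_with_norm 𝕜 x y
  nlinarith [two_mul_le_add_sq ‖x - y‖ ‖x + y‖]

variable [NormedAddCommGroup E] [InnerProductSpace 𝕜 E] {A : E →ₗ.[𝕜] E}

theorem re_inner_apply_sub_smul_add (hA : A.IsFormalAdjoint A) (m : ℝ) (w v : A.domain) :
    RCLike.re (inner 𝕜 (A (w - v) - (m : 𝕜) • ((w : E) - v)) ((w : E) + v)) =
      (RCLike.re (inner 𝕜 (w : E) (A w)) - m * ‖(w : E)‖ ^ 2) -
        (RCLike.re (inner 𝕜 (v : E) (A v)) - m * ‖(v : E)‖ ^ 2) := by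
  have hA_cross : RCLike.re (inner 𝕜 (A w) (v : E)) = RCLike.re (inner 𝕜 (A v) (w : E)) := by
    rw [hA, inner_re_symm]
  have h_cross : RCLike.re (inner 𝕜 (w : E) (v : E)) = RCLike.re (inner 𝕜 (v : E) (w : E)) :=
    inner_re_symm _ _
  simp only [A.map_sub, inner_sub_left, inner_add_right, inner_smul_left, RCLike.conj_ofReal,
    map_sub, map_add, RCLike.re_ofReal_mul, ← hA w w, ← hA v v, inner_self_eq_norm_sq, hA_cross,
    h_cross]
  ring

theorem mul_norm_sub_le_norm_apply_sub_smul (hA : A.IsFormalAdjoint A) {m c : ℝ} {w v : A.domain}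
    (hw : (m + c) * ‖(w : E)‖ ^ 2 ≤ RCLike.re (inner 𝕜 (w : E) (A w)))
    (hv : RCLike.re (inner 𝕜 (v : E) (A v)) ≤ (m - c) * ‖(v : E)‖ ^ 2) :
    c * ‖(w : E) - v‖ ≤ ‖A (w - v) - (m : 𝕜) • ((w : E) - v)‖ := by
  rcases le_or_gt c 0 with hc | hc
  · exact (mul_nonpos_of_nonpos_of_nonneg hc (norm_nonneg _)).trans (norm_nonneg _)
  have hsq : c * (‖(w : E)‖ ^ 2 + ‖(v : E)‖ ^ 2) ≤
      ‖A (w - v) - (m : 𝕜) • ((w : E) - v)‖ * ‖(w : E) + v‖ := by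
    calc c * (‖(w : E)‖ ^ 2 + ‖(v : E)‖ ^ 2)
        ≤ (RCLike.re (inner 𝕜 (w : E) (A w)) - m * ‖(w : E)‖ ^ 2) -
            (RCLike.re (inner 𝕜 (v : E) (A v)) - m * ‖(v : E)‖ ^ 2) := by linarith
      _ = RCLike.re (inner 𝕜 (A (w - v) - (m : 𝕜) • ((w : E) - v)) ((w : E) + v)) :=
          (re_inner_apply_sub_smul_add hA m w v).symm
      _ ≤ _ := re_inner_le_norm _ _
  rcases (norm_nonneg ((w : E) + v)).eq_or_lt with hadd | hadd
  · have hsum : ‖(w : E)‖ ^ 2 + ‖(v : E)‖ ^ 2 ≤ 0 := by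
      rw [← hadd, mul_zero] at hsq
      exact nonpos_of_mul_nonpos_right hsq hc
    have hw0 : (w : E) = 0 := norm_eq_zero.1 (by nlinarith)
    have hv0 : (v : E) = 0 := norm_eq_zero.1 (by nlinarith)
    simp [hw0, hv0]
  · refine le_of_mul_le_mul_right ?_ hadd
    calc c * ‖(w : E) - v‖ * ‖(w : E) + v‖
        = c * (‖(w : E) - v‖ * ‖(w : E) + v‖) := mul_assoc _ _ _
      _ ≤ c * (‖(w : E)‖ ^ 2 + ‖(v : E)‖ ^ 2) := by
          gcongr
          exact norm_sub_mul_norm_add_le (𝕜 := 𝕜) _ _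
      _ ≤ _ := hsq

theorem exists_sub_mem_and_le_re_inner {Fpos Fneg : Submodule 𝕜 A.domain}
    (hF : Codisjoint Fpos Fneg) {μ : ℝ}
    (hμ : ∀ x ∈ Fpos, (x : E) ≠ 0 → ∃ y ∈ Fneg,
      μ * ‖(x : E) + y‖ ^ 2 ≤ RCLike.re (inner 𝕜 ((x : E) + y) (A (x + y))))
    (x : A.domain) :
    ∃ w : A.domain, w - x ∈ Fneg ∧ μ * ‖(w : E)‖ ^ 2 ≤ RCLike.re (inner 𝕜 (w : E) (A w)) := by
  obtain ⟨p, n, hp, hn, rfl⟩ := Submodule.codisjoint_iff_exists_add_eq.1 hF x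
  by_cases hp0 : (p : E) = 0
  · obtain rfl : p = 0 := Subtype.ext hp0
    exact ⟨0, by simpa using hn, by simp⟩
  · obtain ⟨y, hy, hle⟩ := hμ p hp hp0
    refine ⟨p + y, ?_, hle⟩
    rw [add_sub_add_left_eq_sub]
    exact Fneg.sub_mem hy hn

open Filter Topology in
theorem krein_gap_condition_general (hA : A.IsFormalAdjoint A) {Fpos Fneg : Submodule 𝕜 A.domain}
    (hF : Codisjoint Fpos Fneg) {l₀ l₁ : ℝ}
    (hl₀ : ∀ y ∈ Fneg, RCLike.re (inner 𝕜 (y : E) (A y)) ≤ l₀ * ‖(y : E)‖ ^ 2)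
    (hl₁ : ∀ x ∈ Fpos, (x : E) ≠ 0 → ∀ ε > 0, ∃ y ∈ Fneg,
      (l₁ - ε) * ‖(x : E) + y‖ ^ 2 ≤ RCLike.re (inner 𝕜 ((x : E) + y) (A (x + y))))
    (x : A.domain) :
    (l₁ - l₀) / 2 * ‖(x : E)‖ ≤ ‖A x - (((l₀ + l₁) / 2 : ℝ) : 𝕜) • (x : E)‖ := by
  have hbound : ∀ ε > 0, ((l₁ - l₀) / 2 - ε) * ‖(x : E)‖ ≤
      ‖A x - (((l₀ + l₁) / 2 : ℝ) : 𝕜) • (x : E)‖ := by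
    intro ε hε
    obtain ⟨w, hwx, hw⟩ :=
      exists_sub_mem_and_le_re_inner hF (fun p hp hp0 ↦ hl₁ p hp hp0 ε hε) x
    have hgap := mul_norm_sub_le_norm_apply_sub_smul (m := (l₀ + l₁) / 2)
      (c := (l₁ - l₀) / 2 - ε) (v := w - x) hA (by convert hw using 2; ring)
      ((hl₀ _ hwx).trans (by gcongr; linarith))
    simpa using hgap
  have hlim : Tendsto (fun ε : ℝ ↦ ((l₁ - l₀) / 2 - ε) * ‖(x : E)‖) (𝓝[>] 0)
      (𝓝 ((l₁ - l₀) / 2 * ‖(x : E)‖)) :=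
    (Continuous.tendsto' (by fun_prop) 0 _ (by rw [sub_zero])).mono_left nhdsWithin_le_nhds
  exact le_of_tendsto hlim (eventually_mem_nhdsWithin.mono hbound)

end GapEstimate

/-- **Krein's gap condition** for a densely defined symmetric operator `A` on a complex
Hilbert space `H`, given an orthogonal decomposition `H = H₊ ⊕ H₋` (via an orthogonal
projection `P = Λ₊`, with `Λ₋ = 1 - P`) leaving the domain invariant, and the gap
assumptions on `λ₀` (upper bound for the form on `F₋ = Λ₋ D(A)`) and `λ₁`
(the inf-sup value over `F₊ = Λ₊ D(A)`): for every `x ∈ D(A)`,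
`‖Ax − ((λ₀+λ₁)/2)·x‖ ≥ ((λ₁−λ₀)/2)·‖x‖`. -/
theorem krein_gap_condition
    {H : Type*} [NormedAddCommGroup H] [InnerProductSpace ℂ H] [CompleteSpace H]
    (A : H →ₗ.[ℂ] H)
    (hdense : Dense (A.domain : Set H))
    (hsymm : ∀ x y : A.domain, ⟪A x, (y : H)⟫ = ⟪(x : H), A y⟫)
    (P : H →L[ℂ] H)
    (hPsa : ∀ u v : H, ⟪P u, v⟫ = ⟪u, P v⟫)
    (hPidem : ∀ u : H, P (P u) = P u)
    (hPinv : ∀ x ∈ A.domain, P x ∈ A.domain)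
    (lam0 lam1 : ℝ) (hgap : lam0 < lam1)
    (hlam0 : ∀ y : A.domain, P (y : H) = 0 →
      (⟪(y : H), A y⟫).re ≤ lam0 * ‖(y : H)‖ ^ 2)
    (hlam1 : ∀ x : A.domain, P (x : H) = (x : H) → (x : H) ≠ 0 → ∀ ε > 0,
      ∃ y : A.domain, P (y : H) = 0 ∧
        (lam1 - ε) * ‖(x : H) + (y : H)‖ ^ 2 ≤ (⟪(x : H) + (y : H), A (x + y)⟫).re) :
    ∀ x : A.domain,
      (lam1 - lam0) / 2 * ‖(x : H)‖ ≤
        ‖A x - (((lam0 + lam1) / 2 : ℝ) : ℂ) • (x : H)‖ := by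
  have hP : IsIdempotentElem (P : Module.End ℂ H) := LinearMap.ext hPidem
  exact krein_gap_condition_general hsymm (codisjoint_submoduleOf_range_ker hP hPinv) hlam0
    fun x hx ↦ hlam1 x ((LinearMap.IsIdempotentElem.mem_range_iff hP).1 hx)
end

section
/- Let u : ℝ → ℂ be continuously differentiable with compact support contained in (−∞,0), u not identically zero, and let ℓ ∈ ℝ. Then the supremum over all continuously differentiable v : ℝ → ℂ with compact support contained in (−∞,0) of 2·Re⟨u, v′ − ℓv⟩_{L²} / (‖u‖_{L²}² + ‖v‖_{L²}²) equals ‖u′ + ℓu‖_{L²}/‖u‖_{L²} = √(‖u′‖_{L²}² + ℓ²‖u‖_{L²}²)/‖u‖_{L²}. -/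
open MeasureTheory

/-!
Integration by parts turns `⟪u, v′ - ℓ v⟫` into `⟪w, v⟫` with `w = -(u′ + ℓ u)`, so the quotient is
at most `‖w‖ / ‖u‖` by Cauchy–Schwarz and AM-GM, with equality at `v = (‖u‖ / ‖w‖) w`. This `v` is
only continuous, so it need not be admissible; but it lies in the `L²`-closure of the admissible
functions, and the quotient is `L²`-continuous. The cross term in `‖u′ + ℓ u‖²` is
`ℓ ∫ (‖u‖²)′ = 0`.
-/

open RCLike TopologicalSpace
open scoped Distributions ENNReal InnerProductSpace

section RayleighQuotient

variable {𝕜 E : Type*} [RCLike 𝕜] [NormedAddCommGroup E] [InnerProductSpace 𝕜 E]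

theorem two_mul_re_inner_div_le (w v : E) {a : ℝ} (ha : 0 < a) :
    2 * re ⟪w, v⟫_𝕜 / (a ^ 2 + ‖v‖ ^ 2) ≤ ‖w‖ / a := by
  rw [div_le_div_iff₀ (by positivity) ha]
  calc 2 * re ⟪w, v⟫_𝕜 * a ≤ 2 * (‖w‖ * ‖v‖) * a := by gcongr; exact re_inner_le_norm w v
    _ = ‖w‖ * (2 * a * ‖v‖) := by ring
    _ ≤ ‖w‖ * (a ^ 2 + ‖v‖ ^ 2) := by gcongr; exact two_mul_le_add_sq a ‖v‖

theorem two_mul_re_inner_smul_self_div (w : E) {a : ℝ} (ha : 0 < a) :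
    2 * re ⟪w, ((a / ‖w‖ : ℝ) : 𝕜) • w⟫_𝕜 / (a ^ 2 + ‖((a / ‖w‖ : ℝ) : 𝕜) • w‖ ^ 2) = ‖w‖ / a := by
  rcases eq_or_ne w 0 with rfl | hw
  · simp
  rw [inner_smul_right, re_ofReal_mul, inner_self_eq_norm_sq, norm_smul, norm_ofReal,
    abs_of_pos (div_pos ha (norm_pos_iff.mpr hw))]
  field_simp
  norm_num

theorem isLUB_image_two_mul_re_inner_div (S : Submodule 𝕜 E) {w : E}
    (hw : w ∈ S.topologicalClosure) {a : ℝ} (ha : 0 < a) :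
    IsLUB ((fun v ↦ 2 * re ⟪w, v⟫_𝕜 / (a ^ 2 + ‖v‖ ^ 2)) '' S) (‖w‖ / a) := by
  have hcont : Continuous fun v : E ↦ 2 * re ⟪w, v⟫_𝕜 / (a ^ 2 + ‖v‖ ^ 2) :=
    Continuous.div (by fun_prop) (by fun_prop) fun v ↦ by positivity
  refine isLUB_of_mem_closure ?_ (image_closure_subset_closure_image hcont
    ⟨_, S.topologicalClosure.smul_mem _ hw, two_mul_re_inner_smul_self_div w ha⟩)
  rintro _ ⟨v, -, rfl⟩
  exact two_mul_re_inner_div_le w v ha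

end RayleighQuotient

section L2

variable {α F : Type*} {m : MeasurableSpace α} {μ : Measure α} [NormedAddCommGroup F] {f g : α → F}

theorem norm_memLp_toLp (hf : MemLp f 2 μ) : ‖hf.toLp f‖ = √(∫ x, ‖f x‖ ^ 2 ∂μ) := by
  rw [Lp.norm_toLp, hf.eLpNorm_eq_integral_rpow_norm (by simp) (by simp),
    ENNReal.toReal_ofReal (by positivity), Real.sqrt_eq_rpow]
  simp

theorem inner_memLp_toLp {𝕜 : Type*} [RCLike 𝕜] [InnerProductSpace 𝕜 F] (hf : MemLp f 2 μ)
    (hg : MemLp g 2 μ) : ⟪hf.toLp f, hg.toLp g⟫_𝕜 = ∫ x, ⟪f x, g x⟫_𝕜 ∂μ := by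
  refine integral_congr_ae ?_
  filter_upwards [hf.coeFn_toLp, hg.coeFn_toLp] with x hfx hgx
  rw [hfx, hgx]

end L2

theorem integrable_norm_sq_of_hasCompactSupport {X F : Type*} [TopologicalSpace X]
    [MeasurableSpace X] [OpensMeasurableSpace X] {μ : Measure X} [IsFiniteMeasureOnCompacts μ]
    [NormedAddCommGroup F] {f : X → F} (hf : Continuous f) (hfs : HasCompactSupport f) :
    Integrable (fun x ↦ ‖f x‖ ^ 2) μ :=
  Continuous.integrable_of_hasCompactSupport (by fun_prop)
    (hfs.comp_left (g := fun y ↦ ‖y‖ ^ 2) (by simp))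

theorem setOf_exists_contDiff_eq_range_testFunction {E F α : Type*} [NormedAddCommGroup E]
    [NormedSpace ℝ E] [NormedAddCommGroup F] [NormedSpace ℝ F] (Ω : Opens E) (n : ℕ∞)
    (Q : (E → F) → α) :
    {r | ∃ v : E → F, ContDiff ℝ n v ∧ HasCompactSupport v ∧ tsupport v ⊆ Ω ∧ r = Q v} =
      Set.range fun v : 𝓓^{n}(Ω, F) ↦ Q v :=
  Set.ext fun _ ↦ ⟨fun ⟨v, hv, hvs, hvΩ, h⟩ ↦ ⟨⟨v, hv, hvs, hvΩ⟩, h.symm⟩,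
    fun ⟨v, h⟩ ↦ ⟨v, v.contDiff, v.hasCompactSupport, v.tsupport_subset, h.symm⟩⟩

section Density

variable {𝕜 E F : Type*} [NormedAddCommGroup E] [NormedSpace ℝ E] [MeasurableSpace E] [BorelSpace E]
  [NormedAddCommGroup F] [NormedSpace ℝ F] {Ω : Opens E} {n : ℕ∞} {p : ℝ≥0∞} {μ : Measure E}
  [IsFiniteMeasureOnCompacts μ]

variable (n) in
theorem exists_contDiff_eLpNorm_sub_le [FiniteDimensional ℝ E] (hp : p ≠ ∞) {f : E → F}
    (hf : Continuous f) (hfs : HasCompactSupport f) {ε : ℝ≥0∞} (hε : ε ≠ 0) :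
    ∃ g : E → F, ContDiff ℝ n g ∧ Function.support g ⊆ Function.support f ∧
      eLpNorm (f - g) p μ ≤ ε := by
  have hK : μ (tsupport f) ^ (1 / p.toReal) ≠ ∞ :=
    ENNReal.rpow_ne_top_of_nonneg (by positivity) hfs.measure_lt_top.ne
  obtain ⟨δ, hδ, hδε⟩ := ENNReal.exists_nnreal_pos_mul_lt hK hε
  obtain ⟨g, hg, hgf, hgs⟩ := hf.exists_contDiff_approx n (ε := fun _ ↦ (δ : ℝ)) continuous_const
    fun _ ↦ hδ
  refine ⟨g, hg, hgs, (eLpNorm_sub_le_of_dist_bdd μ hp hfs.measurableSet δ.2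
    (fun x ↦ (dist_comm (f x) (g x)).trans_le (hgf x).le) (subset_tsupport f)
    (hgs.trans (subset_tsupport f))).trans ?_⟩
  simpa using hδε.le

theorem setIntegral_norm_sq_testFunction_pos [μ.IsOpenPosMeasure] {u : 𝓓^{n}(Ω, F)}
    (hu : u ≠ 0) : 0 < ∫ x in Ω, ‖u x‖ ^ 2 ∂μ := by
  obtain ⟨x, hx⟩ := DFunLike.ne_iff.mp hu
  rw [setIntegral_eq_integral_of_forall_compl_eq_zero fun y hy ↦ by
    simp [image_eq_zero_of_notMem_tsupport fun h ↦ hy (u.tsupport_subset h)]]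
  exact (u.continuous.norm.pow 2).integral_pos_of_hasCompactSupport_nonneg_nonzero (x := x)
    (u.hasCompactSupport.comp_left (g := fun y : F ↦ ‖y‖ ^ 2) (by simp)) (fun y ↦ by positivity)
    (pow_ne_zero 2 (norm_ne_zero_iff.mpr hx))

theorem memLp_testFunction (v : 𝓓^{n}(Ω, F)) : MemLp v p μ :=
  v.continuous.memLp_of_hasCompactSupport v.hasCompactSupport

variable [NormedField 𝕜] [NormedSpace 𝕜 F] [SMulCommClass ℝ 𝕜 F]

variable (𝕜 Ω n p μ) in
/-- The inclusion of the test functions on `Ω` into `L^p(μ)`, as a linear map. The measure lives on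
the whole space; take `μ.restrict Ω` to land in `L^p` of `Ω`. -/
noncomputable def testFunctionToLp : 𝓓^{n}(Ω, F) →ₗ[𝕜] Lp F p μ where
  toFun v := (memLp_testFunction v).toLp v
  map_add' _ _ := rfl
  map_smul' _ _ := rfl

theorem testFunctionToLp_apply (v : 𝓓^{n}(Ω, F)) :
    testFunctionToLp 𝕜 Ω n p μ v = (memLp_testFunction v).toLp v :=
  rfl

variable (n) in
theorem toLp_mem_topologicalClosure_range_testFunctionToLp [FiniteDimensional ℝ E] [Fact (1 ≤ p)]
    (hp : p ≠ ∞) {f : E → F} (hf : Continuous f) (hfs : HasCompactSupport f)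
    (hfΩ : tsupport f ⊆ Ω) :
    (hf.memLp_of_hasCompactSupport hfs).toLp f ∈
      (LinearMap.range (testFunctionToLp 𝕜 (F := F) Ω n p μ)).topologicalClosure := by
  refine EMetric.mem_closure_iff.mpr fun ε hε ↦ ?_
  obtain ⟨δ, hδ, hδε⟩ := exists_between hε
  obtain ⟨g, hg, hgf, hfg⟩ := exists_contDiff_eLpNorm_sub_le (μ := μ) n hp hf hfs hδ.ne'
  let v : 𝓓^{n}(Ω, F) := ⟨g, hg, hfs.mono hgf, (closure_mono hgf).trans hfΩ⟩
  exact ⟨_, ⟨v, rfl⟩, (Lp.edist_toLp_toLp f v _ (memLp_testFunction v)).trans_lt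
    (hfg.trans_lt hδε)⟩

end Density

section IntegrationByParts

theorem setIntegral_deriv_eq_zero {F : Type*} [NormedAddCommGroup F] [NormedSpace ℝ F] {s : Set ℝ}
    {f : ℝ → F} (hf : ContDiff ℝ 1 f) (hfs : HasCompactSupport f) (hs : tsupport f ⊆ s) :
    ∫ x in s, deriv f x = 0 := by
  rw [setIntegral_eq_integral_of_forall_compl_eq_zero
    fun x hx ↦ deriv_of_notMem_tsupport fun h ↦ hx (hs h)]
  exact integral_eq_zero_of_hasDerivAt_of_integrable
    (fun x ↦ (hf.differentiable one_ne_zero x).hasDerivAt)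
    ((hf.continuous_deriv le_rfl).integrable_of_hasCompactSupport hfs.deriv)
    (hf.continuous.integrable_of_hasCompactSupport hfs)

variable {𝕜 F : Type*} [RCLike 𝕜] [NormedAddCommGroup F] [InnerProductSpace 𝕜 F]

theorem integrable_inner_of_hasCompactSupport_left {X : Type*} [TopologicalSpace X]
    [MeasurableSpace X] [OpensMeasurableSpace X] {μ : Measure X} [IsFiniteMeasureOnCompacts μ]
    {f g : X → F} (hf : Continuous f) (hfs : HasCompactSupport f) (hg : Continuous g) :
    Integrable (fun x ↦ ⟪f x, g x⟫_𝕜) μ :=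
  (hf.inner hg).integrable_of_hasCompactSupport <|
    hfs.mono fun x hx hfx ↦ hx <| by simp [hfx]

variable [NormedSpace ℝ F] {s : Set ℝ} {f g : ℝ → F}

theorem setIntegral_inner_deriv (hf : ContDiff ℝ 1 f) (hfs : HasCompactSupport f)
    (hs : tsupport f ⊆ s) (hg : ContDiff ℝ 1 g) :
    ∫ x in s, ⟪f x, deriv g x⟫_𝕜 = -∫ x in s, ⟪deriv f x, g x⟫_𝕜 := by
  have hsupp : Function.support (fun x ↦ ⟪f x, g x⟫_𝕜) ⊆ Function.support f :=
    fun x hx hfx ↦ hx <| by simp [hfx]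
  have hderiv (x : ℝ) : deriv (fun x ↦ ⟪f x, g x⟫_𝕜) x = ⟪f x, deriv g x⟫_𝕜 + ⟪deriv f x, g x⟫_𝕜 :=
    ((hf.differentiable one_ne_zero x).hasDerivAt.inner 𝕜
      (hg.differentiable one_ne_zero x).hasDerivAt).deriv
  rw [← add_eq_zero_iff_eq_neg, ← integral_add
    (integrable_inner_of_hasCompactSupport_left hf.continuous hfs (hg.continuous_deriv le_rfl))
    (integrable_inner_of_hasCompactSupport_left (hf.continuous_deriv le_rfl) hfs.deriv
      hg.continuous)]
  simp only [← hderiv]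
  exact setIntegral_deriv_eq_zero (hf.inner 𝕜 hg) (hfs.mono hsupp) ((closure_mono hsupp).trans hs)

theorem setIntegral_inner_deriv_sub_smul (hf : ContDiff ℝ 1 f) (hfs : HasCompactSupport f)
    (hs : tsupport f ⊆ s) (hg : ContDiff ℝ 1 g) (c : ℝ) :
    ∫ x in s, ⟪f x, deriv g x - c • g x⟫_𝕜 = -∫ x in s, ⟪deriv f x + c • f x, g x⟫_𝕜 := by
  have hfg : IntegrableOn (fun x ↦ ⟪f x, g x⟫_𝕜) s :=
    integrable_inner_of_hasCompactSupport_left hf.continuous hfs hg.continuous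
  have hfg' : IntegrableOn (fun x ↦ ⟪f x, deriv g x⟫_𝕜) s :=
    integrable_inner_of_hasCompactSupport_left hf.continuous hfs (hg.continuous_deriv le_rfl)
  have hf'g : IntegrableOn (fun x ↦ ⟪deriv f x, g x⟫_𝕜) s :=
    integrable_inner_of_hasCompactSupport_left (hf.continuous_deriv le_rfl) hfs.deriv hg.continuous
  have hcfg : IntegrableOn (fun x ↦ c • ⟪f x, g x⟫_𝕜) s := hfg.smul c
  simp only [inner_sub_right, inner_add_left, inner_smul_right_eq_smul, inner_smul_left_eq_smul]
  rw [integral_sub hfg' hcfg, integral_add hf'g hcfg,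
    setIntegral_inner_deriv hf hfs hs hg, neg_add']

theorem re_setIntegral_inner_deriv_self_eq_zero (hf : ContDiff ℝ 1 f) (hfs : HasCompactSupport f)
    (hs : tsupport f ⊆ s) : re (∫ x in s, ⟪deriv f x, f x⟫_𝕜) = 0 := by
  have hconj : ∫ x in s, ⟪f x, deriv f x⟫_𝕜 = starRingEnd 𝕜 (∫ x in s, ⟪deriv f x, f x⟫_𝕜) := by
    simp only [← integral_conj, inner_conj_symm]
  have hparts := congrArg re (setIntegral_inner_deriv (𝕜 := 𝕜) hf hfs hs hf)
  rw [hconj, conj_re, map_neg] at hparts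
  linarith

end IntegrationByParts

theorem setIntegral_norm_sq_deriv_add_smul (𝕜 : Type*) {F : Type*} [RCLike 𝕜]
    [NormedAddCommGroup F] [InnerProductSpace 𝕜 F] [NormedSpace ℝ F] {s : Set ℝ} {f : ℝ → F}
    (hf : ContDiff ℝ 1 f) (hfs : HasCompactSupport f) (hs : tsupport f ⊆ s) (c : ℝ) :
    ∫ x in s, ‖deriv f x + c • f x‖ ^ 2 =
      (∫ x in s, ‖deriv f x‖ ^ 2) + c ^ 2 * ∫ x in s, ‖f x‖ ^ 2 := by
  have hf' := hf.continuous_deriv le_rfl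
  have hcross : IntegrableOn (fun x ↦ ⟪deriv f x, f x⟫_𝕜) s :=
    integrable_inner_of_hasCompactSupport_left hf' hfs.deriv hf.continuous
  have hpointwise (x : ℝ) : ‖deriv f x + c • f x‖ ^ 2 =
      ‖deriv f x‖ ^ 2 + 2 * c * re ⟪deriv f x, f x⟫_𝕜 + c ^ 2 * ‖f x‖ ^ 2 := by
    rw [norm_add_sq (𝕜 := 𝕜), inner_smul_right_eq_smul, smul_re, norm_smul, mul_pow,
      Real.norm_eq_abs, sq_abs, mul_assoc]
  simp only [hpointwise]
  rw [integral_add, integral_add, integral_const_mul, integral_const_mul, integral_re hcross,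
    re_setIntegral_inner_deriv_self_eq_zero hf hfs hs, mul_zero, add_zero]
  · exact integrable_norm_sq_of_hasCompactSupport hf' hfs.deriv
  · exact hcross.re.const_mul _
  · exact (integrable_norm_sq_of_hasCompactSupport hf' hfs.deriv).add (hcross.re.const_mul _)
  · exact (integrable_norm_sq_of_hasCompactSupport hf.continuous hfs).const_mul _

theorem tsupport_deriv_add_smul_subset {F : Type*} [NormedAddCommGroup F] [NormedSpace ℝ F]
    (f : ℝ → F) (c : ℝ) : tsupport (fun x ↦ deriv f x + c • f x) ⊆ tsupport f :=
  (tsupport_add _ _).trans <| Set.union_subset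
    (closure_minimal support_deriv_subset isClosed_closure) (tsupport_smul_subset_right _ f)

theorem isLUB_range_two_mul_re_setIntegral_inner_div {𝕜 F : Type*} [RCLike 𝕜]
    [NormedAddCommGroup F] [InnerProductSpace 𝕜 F] [NormedSpace ℝ F] {Ω : Opens ℝ} {u : 𝓓^{1}(Ω, F)}
    (hu : u ≠ 0) (ℓ : ℝ) :
    IsLUB (Set.range fun v : 𝓓^{1}(Ω, F) ↦
        2 * re (∫ x in Ω, ⟪u x, deriv v x - ℓ • v x⟫_𝕜) /
          ((∫ x in Ω, ‖u x‖ ^ 2) + ∫ x in Ω, ‖v x‖ ^ 2))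
      (√(∫ x in Ω, ‖deriv u x + ℓ • u x‖ ^ 2) / √(∫ x in Ω, ‖u x‖ ^ 2)) := by
  have hu1 : ContDiff ℝ 1 u := u.contDiff
  have hupos := setIntegral_norm_sq_testFunction_pos (μ := volume) hu
  set w : ℝ → F := fun x ↦ deriv u x + ℓ • u x
  have hw : Continuous w := (hu1.continuous_deriv le_rfl).add (u.continuous.const_smul ℓ)
  have hws : HasCompactSupport w := u.hasCompactSupport.deriv.add u.hasCompactSupport.smul_left
  have hwΩ : tsupport w ⊆ Ω := (tsupport_deriv_add_smul_subset u ℓ).trans u.tsupport_subset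
  have hw2 : MemLp w 2 (volume.restrict Ω) := hw.memLp_of_hasCompactSupport hws
  have hpairing (v : 𝓓^{1}(Ω, F)) : ∫ x in Ω, ⟪u x, deriv v x - ℓ • v x⟫_𝕜 =
      ⟪-hw2.toLp w, testFunctionToLp 𝕜 Ω 1 2 (volume.restrict Ω) v⟫_𝕜 := by
    rw [inner_neg_left, testFunctionToLp_apply, inner_memLp_toLp,
      setIntegral_inner_deriv_sub_smul hu1 u.hasCompactSupport u.tsupport_subset v.contDiff]
  have hnorm (v : 𝓓^{1}(Ω, F)) : ∫ x in Ω, ‖v x‖ ^ 2 =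
      ‖testFunctionToLp 𝕜 Ω 1 2 (volume.restrict Ω) v‖ ^ 2 := by
    rw [testFunctionToLp_apply, norm_memLp_toLp, Real.sq_sqrt (by positivity)]
  have hclosure : hw2.toLp w ∈
      (LinearMap.range (testFunctionToLp 𝕜 Ω 1 2 (volume.restrict Ω))).topologicalClosure :=
    toLp_mem_topologicalClosure_range_testFunctionToLp 1 ENNReal.ofNat_ne_top hw hws hwΩ
  have hsup := isLUB_image_two_mul_re_inner_div _ (neg_mem hclosure) (Real.sqrt_pos.mpr hupos)
  rw [norm_neg, norm_memLp_toLp hw2, LinearMap.coe_range, ← Set.range_comp,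
    Real.sq_sqrt hupos.le] at hsup
  simpa only [hpairing, hnorm] using! hsup

theorem sup_single_mode_general {𝕜 F : Type*} [RCLike 𝕜] [NormedAddCommGroup F]
    [InnerProductSpace 𝕜 F] [NormedSpace ℝ F] {Ω : Set ℝ} (hΩ : IsOpen Ω) {u : ℝ → F}
    (hu : ContDiff ℝ 1 u) (hus : HasCompactSupport u) (huΩ : tsupport u ⊆ Ω) (hu0 : u ≠ 0)
    (ℓ : ℝ) :
    IsLUB {r : ℝ | ∃ v : ℝ → F, ContDiff ℝ 1 v ∧ HasCompactSupport v ∧ tsupport v ⊆ Ω ∧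
        r = 2 * re (∫ x in Ω, ⟪u x, deriv v x - ℓ • v x⟫_𝕜) /
          ((∫ x in Ω, ‖u x‖ ^ 2) + ∫ x in Ω, ‖v x‖ ^ 2)}
      (√(∫ x in Ω, ‖deriv u x + ℓ • u x‖ ^ 2) / √(∫ x in Ω, ‖u x‖ ^ 2)) ∧
    √(∫ x in Ω, ‖deriv u x + ℓ • u x‖ ^ 2) =
      √((∫ x in Ω, ‖deriv u x‖ ^ 2) + ℓ ^ 2 * ∫ x in Ω, ‖u x‖ ^ 2) := by
  refine ⟨?_, congrArg Real.sqrt <| setIntegral_norm_sq_deriv_add_smul 𝕜 hu hus huΩ ℓ⟩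
  let u' : 𝓓^{1}(⟨Ω, hΩ⟩, F) := ⟨u, hu, hus, huΩ⟩
  have hu' : u' ≠ 0 := fun h ↦ hu0 (congrArg DFunLike.coe h)
  exact (congrArg (IsLUB · _) (setOf_exists_contDiff_eq_range_testFunction ⟨Ω, hΩ⟩ 1 _)).mpr
    (isLUB_range_two_mul_re_setIntegral_inner_div hu' ℓ)

/-- Let `u : ℝ → ℂ` be continuously differentiable with compact support contained in
`(−∞,0)`, `u` not identically zero, and `ℓ ∈ ℝ`. Then the supremum over all continuously
differentiable `v : ℝ → ℂ` with compact support contained in `(−∞,0)` of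
`2·Re⟨u, v′ − ℓv⟩_{L²} / (‖u‖² + ‖v‖²)` equals
`‖u′ + ℓu‖/‖u‖ = √(‖u′‖² + ℓ²‖u‖²)/‖u‖` (all norms in `L²((−∞,0))`). -/
theorem sup_single_mode
    (u : ℝ → ℂ) (hu1 : ContDiff ℝ 1 u) (hu2 : HasCompactSupport u)
    (hu3 : tsupport u ⊆ Set.Iio 0) (hu0 : u ≠ 0) (ℓ : ℝ) :
    IsLUB {r : ℝ | ∃ v : ℝ → ℂ, ContDiff ℝ 1 v ∧ HasCompactSupport v ∧
        tsupport v ⊆ Set.Iio 0 ∧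
        r = 2 * (∫ x in Set.Iio (0 : ℝ),
              (starRingEnd ℂ) (u x) * (deriv v x - (ℓ : ℂ) * v x)).re /
            ((∫ x in Set.Iio (0 : ℝ), ‖u x‖ ^ 2) + ∫ x in Set.Iio (0 : ℝ), ‖v x‖ ^ 2)}
      (Real.sqrt (∫ x in Set.Iio (0 : ℝ), ‖deriv u x + (ℓ : ℂ) * u x‖ ^ 2) /
        Real.sqrt (∫ x in Set.Iio (0 : ℝ), ‖u x‖ ^ 2)) ∧
    Real.sqrt (∫ x in Set.Iio (0 : ℝ), ‖deriv u x + (ℓ : ℂ) * u x‖ ^ 2) =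
      Real.sqrt ((∫ x in Set.Iio (0 : ℝ), ‖deriv u x‖ ^ 2) +
        ℓ ^ 2 * ∫ x in Set.Iio (0 : ℝ), ‖u x‖ ^ 2) := by
  simpa only [RCLike.inner_apply'] using!
    sup_single_mode_general (𝕜 := ℂ) isOpen_Iio hu1 hu2 hu3 hu0 ℓ
end
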